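/- Suppose θ is an infinite cardinal < κ such that κ → (κ, θ)², and H is an ideal on P_κ(λ) with cof(H) < non_κ(weakly selective). Then H⁺ →_{κ,κ} (H⁺, θ+1)². -/

import Mathlib

open Cardinal Set

namespace PaperFormal

noncomputable section

/-- The least (small) cardinality of a family `F : Set X` satisfying `P`. -/
def leastCard {X : Type 1} (P : Set X → Prop) : Cardinal.{0} :=
  sInf {c : Cardinal.{0} | ∃ F : Set X, P F ∧ Cardinal.lift.{1} c = #F}

/-- The collection of (codings of) functions from `κ` to `κ`. -/
def funOn (κ : Cardinal.{0}) : Set (Ordinal.{0} → Ordinal.{0}) :=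
  {f | ∀ α < κ.ord, f α < κ.ord}

/-- The unequality number `U_κ`. -/
def uneq (κ : Cardinal.{0}) : Cardinal.{0} :=
  leastCard fun F : Set (Ordinal.{0} → Ordinal.{0}) => F ⊆ funOn κ ∧
    ∀ g ∈ funOn κ, ∃ f ∈ F, {α | α < κ.ord ∧ f α = g α} = ∅

/-- The dominating number `d_κ`. -/
def domNum (κ : Cardinal.{0}) : Cardinal.{0} :=
  leastCard fun F : Set (Ordinal.{0} → Ordinal.{0}) => F ⊆ funOn κ ∧
    ∀ g ∈ funOn κ, ∃ f ∈ F, ∀ α < κ.ord, g α < f α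

/-- The number `d̄_κ`. -/
def domBar (κ : Cardinal.{0}) : Cardinal.{0} :=
  leastCard fun X : Set (Ordinal.{0} → Ordinal.{0}) => X ⊆ funOn κ ∧
    ∀ g ∈ funOn κ, ∃ x ⊆ X, x.Nonempty ∧ #x < Cardinal.lift.{1} κ ∧
      ∀ α < κ.ord, g α < sSup {o | ∃ f ∈ x, f α = o}

/-- The generalized Cantor space `^ρ2`, with points coded as subsets of `Iio ρ.ord`. -/
def cantor (ρ : Cardinal.{0}) : Set (Set Ordinal.{0}) := {x | x ⊆ Iio ρ.ord}

/-- A forcing condition: a pair `(a, t)` with `t ⊆ a ⊆ Iio ρ.ord` and `|a| < ν`. -/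
def IsCond (ν ρ : Cardinal.{0}) (a t : Set Ordinal.{0}) : Prop :=
  a ⊆ Iio ρ.ord ∧ t ⊆ a ∧ #a < Cardinal.lift.{1} ν

/-- The basic open set determined by a condition. -/
def basicOpen (ρ : Cardinal.{0}) (a t : Set Ordinal.{0}) : Set (Set Ordinal.{0}) :=
  {x | x ⊆ Iio ρ.ord ∧ x ∩ a = t}

/-- Dense open subsets of `^ρ2` (for the `<ν`-support topology). -/
def DenseOpen (ν ρ : Cardinal.{0}) (D : Set (Set Ordinal.{0})) : Prop :=
  D ⊆ cantor ρ ∧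
  (∀ x ∈ D, ∃ a t, IsCond ν ρ a t ∧ x ∈ basicOpen ρ a t ∧ basicOpen ρ a t ⊆ D) ∧
  (∀ a t, IsCond ν ρ a t → (basicOpen ρ a t ∩ D).Nonempty)

/-- Members of `M_{ν,ρ}`. -/
def Meager (ν ρ : Cardinal.{0}) (W : Set (Set Ordinal.{0})) : Prop :=
  W ⊆ cantor ρ ∧ ∃ X : Set (Set (Set Ordinal.{0})), X.Nonempty ∧
    #X ≤ Cardinal.lift.{1} ν ∧ (∀ D ∈ X, DenseOpen ν ρ D) ∧ W ∩ ⋂₀ X = ∅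

/-- The covering number for category `cov(M_{ν,ρ})`. -/
def covM (ν ρ : Cardinal.{0}) : Cardinal.{0} :=
  leastCard fun Y : Set (Set (Set Ordinal.{0})) =>
    (∀ W ∈ Y, Meager ν ρ W) ∧ ⋃₀ Y = cantor ρ

/-- A (`κ`-complete) ideal on `κ`. -/
structure IdealK (κ : Cardinal.{0}) where
  mem : Set (Set Ordinal.{0})
  subset_iio : ∀ A ∈ mem, A ⊆ Iio κ.ord
  singleton_mem : ∀ α < κ.ord, {α} ∈ mem
  subset_mem : ∀ A ∈ mem, ∀ B ⊆ A, B ∈ mem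
  sUnion_mem : ∀ X : Set (Set Ordinal.{0}), X ⊆ mem → #X < Cardinal.lift.{1} κ → ⋃₀ X ∈ mem
  ne_top : Iio κ.ord ∉ mem

/-- `J⁺`, the sets (⊆ κ) not in the ideal. -/
def IdealK.plus {κ : Cardinal.{0}} (J : IdealK κ) : Set (Set Ordinal.{0}) :=
  {A | A ⊆ Iio κ.ord ∧ A ∉ J.mem}

/-- `cof(J)`. -/
def IdealK.cof {κ : Cardinal.{0}} (J : IdealK κ) : Cardinal.{0} :=
  leastCard fun X : Set (Set Ordinal.{0}) =>
    X ⊆ J.mem ∧ ∀ A, A ∈ J.mem ↔ ∃ B ∈ X, A ⊆ B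

/-- `cof̄(J)`. -/
def IdealK.cofBar {κ : Cardinal.{0}} (J : IdealK κ) : Cardinal.{0} :=
  leastCard fun X : Set (Set Ordinal.{0}) =>
    X ⊆ J.mem ∧ ∀ A ∈ J.mem, ∃ x ⊆ X, #x < Cardinal.lift.{1} κ ∧ A ⊆ ⋃₀ x

/-- `non_κ(P)`. -/
def nonK (κ : Cardinal.{0}) (P : IdealK κ → Prop) : Cardinal.{0} :=
  sInf {c | ∃ J : IdealK κ, J.cof = c ∧ ¬ P J}

/-- `non̄_κ(P)`. -/
def nonBarK (κ : Cardinal.{0}) (P : IdealK κ → Prop) : Cardinal.{0} :=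
  sInf {c | ∃ J : IdealK κ, J.cofBar = c ∧ ¬ P J}

/-- Weak `P`-point. -/
def WeakPPoint {κ : Cardinal.{0}} (J : IdealK κ) : Prop :=
  ∀ A ∈ J.plus, ∀ f : Ordinal.{0} → Ordinal.{0},
    (∀ α ∈ A, f α < κ.ord) → (∀ β, {α ∈ A | f α = β} ∈ J.mem) →
    ∃ B ∈ J.plus, B ⊆ A ∧ ∀ β, #{α ∈ B | f α = β} < Cardinal.lift.{1} κ

/-- Weak `Q`-point. -/
def WeakQPoint {κ : Cardinal.{0}} (J : IdealK κ) : Prop :=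
  ∀ A ∈ J.plus, ∀ g ∈ funOn κ,
    ∃ B ∈ J.plus, B ⊆ A ∧ ∀ α ∈ B, ∀ β ∈ B, α < β → g α < β

/-- Weakly selective ideal. -/
def WeaklySelective {κ : Cardinal.{0}} (J : IdealK κ) : Prop :=
  WeakPPoint J ∧ WeakQPoint J

/-- Weak semi-`Q`-point. -/
def WeakSemiQPoint {κ : Cardinal.{0}} (J : IdealK κ) : Prop :=
  ∀ A ∈ J.plus, ∀ f : Ordinal.{0} → Ordinal.{0},
    (∀ α ∈ A, f α < κ.ord) →
    (∀ β, #{α ∈ A | f α = β} < Cardinal.lift.{1} κ) →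
    ∃ C ∈ J.plus, C ⊆ A ∧ ∀ β < κ.ord, #{α ∈ C | f α = β} ≤ Cardinal.lift.{1} β.card

/-- `P_κ(λ)`, coded as the small subsets of `Iio λ.ord`. -/
def smallSet (κ lam : Cardinal.{0}) : Set (Set Ordinal.{0}) :=
  {a | a ⊆ Iio lam.ord ∧ #a < Cardinal.lift.{1} κ}

/-- The ideal `I_{κ,λ}` of noncofinal subsets of `P_κ(λ)`. -/
def Ikl (κ lam : Cardinal.{0}) : Set (Set (Set Ordinal.{0})) :=
  {A | A ⊆ smallSet κ lam ∧ ∃ a ∈ smallSet κ lam, ∀ b ∈ A, ¬ a ⊆ b}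

/-- A (`κ`-complete fine) ideal on `P_κ(λ)`. -/
structure IdealP (κ lam : Cardinal.{0}) where
  mem : Set (Set (Set Ordinal.{0}))
  subset_pk : ∀ A ∈ mem, A ⊆ smallSet κ lam
  fine : Ikl κ lam ⊆ mem
  subset_mem : ∀ A ∈ mem, ∀ B ⊆ A, B ∈ mem
  sUnion_mem : ∀ X : Set (Set (Set Ordinal.{0})), X ⊆ mem →
    #X < Cardinal.lift.{1} κ → ⋃₀ X ∈ mem
  ne_top : smallSet κ lam ∉ mem

/-- `H⁺` computed from the underlying collection `Hm` of an ideal on `P_κ(λ)`. -/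
def plusOf (κ lam : Cardinal.{0}) (Hm : Set (Set (Set Ordinal.{0}))) :
    Set (Set (Set Ordinal.{0})) :=
  {A | A ⊆ smallSet κ lam ∧ A ∉ Hm}

/-- `H⁺`. -/
def IdealP.plus {κ lam : Cardinal.{0}} (H : IdealP κ lam) : Set (Set (Set Ordinal.{0})) :=
  plusOf κ lam H.mem

/-- `cof(H)`. -/
def IdealP.cof {κ lam : Cardinal.{0}} (H : IdealP κ lam) : Cardinal.{0} :=
  leastCard fun X : Set (Set (Set Ordinal.{0})) =>
    X ⊆ H.mem ∧ ∀ A, A ∈ H.mem ↔ ∃ B ∈ X, A ⊆ B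

/-- `cof̄(H)`. -/
def IdealP.cofBar {κ lam : Cardinal.{0}} (H : IdealP κ lam) : Cardinal.{0} :=
  leastCard fun X : Set (Set (Set Ordinal.{0})) =>
    X ⊆ H.mem ∧ ∀ A ∈ H.mem, ∃ x ⊆ X, #x < Cardinal.lift.{1} κ ∧ A ⊆ ⋃₀ x

/-- `d^κ_{κ,λ}`. -/
def domP (κ lam : Cardinal.{0}) : Cardinal.{0} :=
  leastCard fun F : Set (Ordinal.{0} → Set Ordinal.{0}) =>
    (∀ f ∈ F, ∀ α < κ.ord, f α ∈ smallSet κ lam) ∧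
    ∀ g : Ordinal.{0} → Set Ordinal.{0}, (∀ α < κ.ord, g α ∈ smallSet κ lam) →
      ∃ f ∈ F, ∀ α < κ.ord, g α ⊆ f α

/-- A maximal almost disjoint family of size `≥ κ` for `H` (a member of `M_H^{≥κ}`). -/
def IsMad {κ lam : Cardinal.{0}} (H : IdealP κ lam) (Q : Set (Set (Set Ordinal.{0}))) : Prop :=
  Q ⊆ H.plus ∧ Cardinal.lift.{1} κ ≤ #Q ∧
  (∀ A ∈ Q, ∀ B ∈ Q, A ≠ B → A ∩ B ∈ H.mem) ∧
  ∀ C ∈ H.plus, ∃ A ∈ Q, A ∩ C ∈ H.plus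

/-- The (small) cardinal `c` with `lift c = c'`, used to pull `λ^{<κ} = |P_κ(λ)|` down. -/
def downCard (c : Cardinal.{1}) : Cardinal.{0} :=
  sInf {d : Cardinal.{0} | Cardinal.lift.{1} d = c}

open Classical in
/-- The number `a_H`. -/
def aNum {κ lam : Cardinal.{0}} (H : IdealP κ lam) : Cardinal.{0} :=
  if ∃ Q, IsMad H Q then sInf {c | ∃ Q, IsMad H Q ∧ Cardinal.lift.{1} c = #Q}
  else 2 ^ Order.succ (downCard #(smallSet κ lam))

/-- Weak `π`-point. -/
def WeakPiPoint {κ lam : Cardinal.{0}} (H : IdealP κ lam) : Prop :=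
  ∀ f : Ordinal.{0} → Set (Set Ordinal.{0}), (∀ α < κ.ord, f α ∈ H.mem) →
    ∀ A ∈ H.plus, ∃ B ∈ H.plus, B ⊆ A ∧ ∀ α < κ.ord, B ∩ f α ∈ Ikl κ lam

/-- `∪(a ∩ κ)`. -/
def supK (κ : Cardinal.{0}) (a : Set Ordinal.{0}) : Ordinal.{0} :=
  sSup (a ∩ Iio κ.ord)

/-- The relation `a ≺ b`. -/
def prec (κ : Cardinal.{0}) (a b : Set Ordinal.{0}) : Prop :=
  a ⊆ b ∧ supK κ a < supK κ b

/-- `[A]_κ²`. -/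
def pairsK (κ : Cardinal.{0}) (A : Set (Set Ordinal.{0})) : Set (Ordinal.{0} × Set Ordinal.{0}) :=
  {p | ∃ a ∈ A, ∃ b ∈ A, supK κ a < supK κ b ∧ p = (supK κ a, b)}

/-- `[A]_≺²`. -/
def pairsPrec (κ : Cardinal.{0}) (A : Set (Set Ordinal.{0})) :
    Set (Ordinal.{0} × Set Ordinal.{0}) :=
  {p | ∃ a ∈ A, ∃ b ∈ A, prec κ a b ∧ p = (supK κ a, b)}

/-- `[A]_{κ,κ}²`. -/
def pairsKK (κ : Cardinal.{0}) (A : Set (Set Ordinal.{0})) : Set (Ordinal.{0} × Ordinal.{0}) :=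
  {p | ∃ a ∈ A, ∃ b ∈ A, supK κ a < supK κ b ∧ p = (supK κ a, supK κ b)}

/-- `S` is a set of ordinals of order type `α`. -/
def OrdType (S : Set Ordinal.{0}) (α : Ordinal.{0}) : Prop :=
  ∃ e : Ordinal.{0} → Ordinal.{0},
    (∀ i < α, ∀ j < α, i < j → e i < e j) ∧ e '' Iio α = S

/-- `(B, ≺)` has order type `α`. -/
def OrdTypePrec (κ : Cardinal.{0}) (B : Set (Set Ordinal.{0})) (α : Ordinal.{0}) : Prop :=
  ∃ e : Ordinal.{0} → Set Ordinal.{0},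
    (∀ i < α, ∀ j < α, i < j → prec κ (e i) (e j)) ∧ e '' Iio α = B

/-- The partition relation `κ → (κ, θ)²`. -/
def ArrowKTheta (κ : Cardinal.{0}) (θ : Ordinal.{0}) : Prop :=
  ∀ f : Ordinal.{0} → Ordinal.{0} → Fin 2, ∃ A ⊆ Iio κ.ord,
    (OrdType A κ.ord ∧ ∀ α ∈ A, ∀ β ∈ A, α < β → f α β = 0) ∨
    (OrdType A θ ∧ ∀ α ∈ A, ∀ β ∈ A, α < β → f α β = 1)

/-- `κ` is weakly compact. -/
def WeaklyCompact (κ : Cardinal.{0}) : Prop :=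
  ∀ f : Ordinal.{0} → Ordinal.{0} → Fin 2, ∃ A ⊆ Iio κ.ord,
    OrdType A κ.ord ∧ ∃ i, ∀ α ∈ A, ∀ β ∈ A, α < β → f α β = i

/-- The partition relation `J⁺ → (J⁺, α)²` for an ideal on `κ`. -/
def ArrowJ {κ : Cardinal.{0}} (J : IdealK κ) (α : Ordinal.{0}) : Prop :=
  ∀ A ∈ J.plus, ∀ f : Ordinal.{0} → Ordinal.{0} → Fin 2,
    ∃ B ⊆ A, (B ∈ J.plus ∧ ∀ β ∈ B, ∀ γ ∈ B, β < γ → f β γ = 0) ∨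
             (OrdType B α ∧ ∀ β ∈ B, ∀ γ ∈ B, β < γ → f β γ = 1)

/-- The square bracket relation `J⁺ → [J⁺]_ρ²` for an ideal on `κ`. -/
def SqBrJ {κ : Cardinal.{0}} (J : IdealK κ) (ρ : Cardinal.{0}) : Prop :=
  ∀ A ∈ J.plus, ∀ f : Ordinal.{0} → Ordinal.{0} → Ordinal.{0},
    (∀ β ∈ A, ∀ γ ∈ A, β < γ → f β γ < ρ.ord) →
    ∃ B ∈ J.plus, B ⊆ A ∧ {ξ | ∃ β ∈ B, ∃ γ ∈ B, β < γ ∧ f β γ = ξ} ≠ Iio ρ.ord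

/-- `H⁺ →_κ (H⁺, α)²`. -/
def ArrowP (κ lam : Cardinal.{0}) (Hm : Set (Set (Set Ordinal.{0}))) (α : Ordinal.{0}) : Prop :=
  ∀ F : Ordinal.{0} → Set Ordinal.{0} → Fin 2, ∀ A ∈ plusOf κ lam Hm,
    ∃ B ⊆ A, (B ∈ plusOf κ lam Hm ∧ ∀ p ∈ pairsK κ B, F p.1 p.2 = 0) ∨
             (OrdTypePrec κ B α ∧ ∀ p ∈ pairsK κ B, F p.1 p.2 = 1)

/-- `H⁺ →_{κ,κ} (H⁺, α)²`. -/
def ArrowPKK (κ lam : Cardinal.{0}) (Hm : Set (Set (Set Ordinal.{0}))) (α : Ordinal.{0}) : Prop :=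
  ∀ F : Ordinal.{0} → Ordinal.{0} → Fin 2, ∀ A ∈ plusOf κ lam Hm,
    ∃ B ⊆ A, (B ∈ plusOf κ lam Hm ∧ ∀ p ∈ pairsKK κ B, F p.1 p.2 = 0) ∨
             (OrdTypePrec κ B α ∧ ∀ p ∈ pairsKK κ B, F p.1 p.2 = 1)

/-- `H⁺ →_{κ,κ} (H⁺; α)²`. -/
def ArrowPKKsemi (κ lam : Cardinal.{0}) (Hm : Set (Set (Set Ordinal.{0}))) (α : Ordinal.{0}) :
    Prop :=
  ∀ F : Ordinal.{0} → Ordinal.{0} → Fin 2, ∀ A ∈ plusOf κ lam Hm,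
    ∃ B ⊆ A, (B ∈ plusOf κ lam Hm ∧ ∀ p ∈ pairsKK κ B, F p.1 p.2 = 0) ∨
             (OrdType {o | ∃ a ∈ B, supK κ a = o} α ∧ ∀ p ∈ pairsKK κ B, F p.1 p.2 = 1)

/-- `H⁺ →_κ (H⁺)²`. -/
def ArrowPConst (κ lam : Cardinal.{0}) (Hm : Set (Set (Set Ordinal.{0}))) : Prop :=
  ∀ F : Ordinal.{0} → Set Ordinal.{0} → Fin 2, ∀ A ∈ plusOf κ lam Hm,
    ∃ B ∈ plusOf κ lam Hm, B ⊆ A ∧ ∃ i, ∀ p ∈ pairsK κ B, F p.1 p.2 = i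

/-- `H⁺ →_{κ,κ} [H⁺]_ρ²`. -/
def SqBrPKK (κ lam : Cardinal.{0}) (Hm : Set (Set (Set Ordinal.{0}))) (ρ : Cardinal.{0}) : Prop :=
  ∀ F : Ordinal.{0} → Ordinal.{0} → Ordinal.{0},
    (∀ α β : Ordinal.{0}, α < β → β < κ.ord → F α β < ρ.ord) →
    ∀ A ∈ plusOf κ lam Hm, ∃ B ∈ plusOf κ lam Hm, B ⊆ A ∧
      {ξ | ∃ p ∈ pairsKK κ B, F p.1 p.2 = ξ} ≠ Iio ρ.ord

/-- The class `K(κ,λ)`. -/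
def Kset (κ lam : Cardinal.{0}) : Set Cardinal.{0} :=
  {σ | lam ≤ σ ∧ ∃ T ⊆ smallSet κ lam, Cardinal.lift.{1} σ = #T ∧
    ∀ a ∈ smallSet κ lam, #{t ∈ T | t ⊆ a} < Cardinal.lift.{1} κ}

end

end PaperFormal

namespace PaperFormal

theorem bnd_image {κ : Cardinal.{0}} (hreg : κ.IsRegular) {X : Type 1} (T : Set X)
    (u : X → Ordinal.{0}) (hT : #T < Cardinal.lift.{1} κ) (h : ∀ t ∈ T, u t < κ.ord) :
    ∃ γ < κ.ord, ∀ t ∈ T, u t < γ := by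
  have hc : #(u '' T) < (Ordinal.lift.{1} κ.ord).cof := by
    rw [← Ordinal.lift_cof, hreg.cof_ord]
    exact (mk_image_le).trans_lt hT
  have hlt : ∀ i ∈ u '' T, i < κ.ord := by
    rintro _ ⟨t, ht, rfl⟩; exact h t ht
  refine ⟨sSup ((· + 1) '' (u '' T)), Ordinal.sSup_add_one_lt_of_lt_cof hc hlt, ?_⟩
  intro t ht
  have hb : BddAbove ((· + 1) '' (u '' T)) := by
    refine ⟨κ.ord, ?_⟩
    rintro _ ⟨i, hi, rfl⟩
    exact Order.add_one_le_of_lt (hlt i hi)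
  have : u t + 1 ≤ sSup ((· + 1) '' (u '' T)) := le_csSup hb ⟨u t, ⟨t, ht, rfl⟩, rfl⟩
  exact (lt_add_one _).trans_le this

theorem mk_Iio_lt {κ : Cardinal.{0}} {γ : Ordinal.{0}} (h : γ < κ.ord) :
    #(Iio γ) < Cardinal.lift.{1} κ := by
  rw [mk_Iio_ordinal, Cardinal.lift_lt]
  exact lt_ord.1 h

theorem no_lex {μ ρ : Cardinal.{0}} (hμ : μ.IsRegular) (hρ : ρ < μ)
    (r : Ordinal.{0} → Ordinal.{0} → Prop) (hirr : ∀ x, ¬ r x x)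
    (e : Ordinal.{0} → Ordinal.{0} → Ordinal.{0})
    (hst : ∀ c < ρ.ord, ∀ δ < μ.ord,
      (∀ i j, δ ≤ i → i < j → j < μ.ord → e i c = e j c ∨ r (e i c) (e j c)) →
      ∃ δ' < μ.ord, ∀ i, δ' ≤ i → i < μ.ord → e i c = e δ' c)
    (hlex : ∀ i j, i < j → j < μ.ord →
      ∃ c < ρ.ord, (∀ c' < c, e i c' = e j c') ∧ r (e i c) (e j c)) : False := by
  have key : ∀ c ≤ ρ.ord, (∀ c' < c, ∃ δ < μ.ord, ∀ i, δ ≤ i → i < μ.ord → e i c' = e δ c') →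
      ∃ γ < μ.ord, ∀ c' < c, ∀ i j, γ ≤ i → i < μ.ord → γ ≤ j → j < μ.ord → e i c' = e j c' := by
    intro c hc ih
    have ih' : ∀ c', ∃ δ < μ.ord, c' < c → ∀ i, δ ≤ i → i < μ.ord → e i c' = e δ c' := by
      intro c'
      by_cases h : c' < c
      · obtain ⟨δ, h1, h2⟩ := ih c' h
        exact ⟨δ, h1, fun _ => h2⟩
      · exact ⟨0, hμ.ord_pos, fun h' => absurd h' h⟩
    choose D hD1 hD2 using ih'
    obtain ⟨γ, hγ, hγ'⟩ := bnd_image hμ (Iio c) D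
      (mk_Iio_lt (hc.trans_lt (ord_lt_ord.2 hρ))) (fun t _ => hD1 t)
    refine ⟨γ, hγ, fun c' hc' i j hi hi' hj hj' => ?_⟩
    rw [hD2 c' hc' i ((hγ' c' hc').le.trans hi) hi', hD2 c' hc' j ((hγ' c' hc').le.trans hj) hj']
  have all : ∀ c, c < ρ.ord → ∃ δ < μ.ord, ∀ i, δ ≤ i → i < μ.ord → e i c = e δ c := by
    intro c
    induction c using WellFoundedLT.induction with
    | ind c ih =>
      intro hc
      obtain ⟨γ, hγ, h⟩ := key c hc.le (fun c' hc' => ih c' hc' (hc'.trans hc))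
      refine hst c hc γ hγ (fun i j hi hij hj => ?_)
      obtain ⟨c0, _, h1, h2⟩ := hlex i j hij hj
      rcases lt_trichotomy c0 c with h3 | h3 | h3
      · rw [h c0 h3 i j hi (hij.trans hj) (hi.trans hij.le) hj] at h2
        exact absurd h2 (hirr _)
      · subst h3; exact Or.inr h2
      · exact Or.inl (h1 c h3)
  obtain ⟨γ, hγ, h⟩ := key ρ.ord le_rfl all
  have hs : γ + 1 < μ.ord := (isSuccLimit_ord hμ.aleph0_le).add_one_lt hγ
  obtain ⟨c0, hc0, h1, h2⟩ := hlex γ (γ + 1) (lt_add_one _) hs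
  rw [h c0 hc0 γ (γ + 1) le_rfl hγ (lt_add_one _).le hs] at h2
  exact hirr _ h2

theorem stab_inc {μ τ : Cardinal.{0}} (hμ : μ.IsRegular) (hτ : τ < μ)
    (u : Ordinal.{0} → Ordinal.{0}) (hu : ∀ i < μ.ord, u i < τ.ord) (δ : Ordinal.{0})
    (hδ : δ < μ.ord)
    (hm : ∀ i j, δ ≤ i → i < j → j < μ.ord → u i = u j ∨ u i < u j) :
    ∃ δ' < μ.ord, ∀ i, δ' ≤ i → i < μ.ord → u i = u δ' := by
  have h1 : ∀ v, ∃ d < μ.ord, (∃ i < μ.ord, δ ≤ i ∧ v < u i) → δ ≤ d ∧ v < u d := by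
    intro v
    by_cases h : ∃ i < μ.ord, δ ≤ i ∧ v < u i
    · obtain ⟨i, hi, h⟩ := h
      exact ⟨i, hi, fun _ => h⟩
    · exact ⟨0, hμ.ord_pos, fun h' => absurd h' h⟩
  choose D hD1 hD2 using h1
  obtain ⟨γ, hγ, hγ'⟩ := bnd_image hμ (Iio τ.ord) D (mk_Iio_lt (ord_lt_ord.2 hτ)) (fun t _ => hD1 t)
  have hmax : max γ δ < μ.ord := max_lt hγ hδ
  refine ⟨max γ δ, hmax, fun i hi hi' => ?_⟩
  rcases hi.eq_or_lt with h | h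
  · rw [h]
  rcases hm _ i (le_max_right _ _) h hi' with h2 | h2
  · exact h2.symm
  exfalso
  obtain ⟨h3, h4⟩ := hD2 (u (max γ δ)) ⟨i, hi', (le_max_right _ _).trans hi, h2⟩
  have h5 : D (u (max γ δ)) < max γ δ := (hγ' _ (hu _ hmax)).trans_le (le_max_left _ _)
  rcases hm _ _ h3 h5 hmax with h6 | h6
  · rw [h6] at h4; exact lt_irrefl _ h4
  · exact lt_asymm h4 h6

theorem stab_dec {μ : Cardinal.{0}}
    (u : Ordinal.{0} → Ordinal.{0}) (δ : Ordinal.{0}) (hδ : δ < μ.ord)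
    (hm : ∀ i j, δ ≤ i → i < j → j < μ.ord → u i = u j ∨ u j < u i) :
    ∃ δ' < μ.ord, ∀ i, δ' ≤ i → i < μ.ord → u i = u δ' := by
  let S : Set Ordinal.{0} := u '' {i | δ ≤ i ∧ i < μ.ord}
  have hS : S.Nonempty := ⟨u δ, δ, ⟨le_rfl, hδ⟩, rfl⟩
  obtain ⟨i0, ⟨h1, h2⟩, h3⟩ := csInf_mem hS
  refine ⟨i0, h2, fun i hi hi' => ?_⟩
  rcases hi.eq_or_lt with h | h
  · rw [h]
  rcases hm i0 i h1 h hi' with h4 | h4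
  · exact h4.symm
  exfalso
  have : sInf S ≤ u i := csInf_le' ⟨i, ⟨h1.trans hi, hi'⟩, rfl⟩
  rw [← h3] at this
  exact absurd h4 this.not_gt

theorem power_lt_of_arrow {κ θ : Cardinal.{0}} (hreg : κ.IsRegular) (huc : ℵ₀ < κ)
    (hθκ : θ < κ) (harrow : ArrowKTheta κ θ.ord) {τ ρ : Cardinal.{0}} (hτ : τ < κ) (hρ : ρ < θ) :
    τ ^ ρ < κ := by
  rcases lt_or_ge ρ ℵ₀ with hfin | hinf
  · obtain ⟨n, rfl⟩ := lt_aleph0.1 hfin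
    exact power_nat_le_max.trans_lt (max_lt hτ huc)
  by_contra hcon
  rw [not_lt] at hcon
  have hle : #(Iio κ.ord) ≤ #(Iio ρ.ord → Iio τ.ord) := by
    rw [← power_def, mk_Iio_ordinal, mk_Iio_ordinal, mk_Iio_ordinal, card_ord, card_ord, card_ord,
      ← lift_power, Cardinal.lift_le]
    exact hcon
  obtain ⟨G0⟩ := hle
  classical
  let G : Ordinal.{0} → Ordinal.{0} → Ordinal.{0} := fun α c =>
    if h : α < κ.ord ∧ c < ρ.ord then (G0 ⟨α, h.1⟩ ⟨c, h.2⟩ : Ordinal.{0}) else 0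
  have hG : ∀ α < κ.ord, ∀ c < ρ.ord, G α c < τ.ord := by
    intro α hα c hc
    simp only [G, dif_pos (And.intro hα hc)]
    exact (G0 ⟨α, hα⟩ ⟨c, hc⟩).2
  have hinj : ∀ α < κ.ord, ∀ β < κ.ord, α ≠ β → ∃ c < ρ.ord, G α c ≠ G β c := by
    intro α hα β hβ hne
    by_contra hc
    push Not at hc
    apply hne
    have : G0 ⟨α, hα⟩ = G0 ⟨β, hβ⟩ := by
      funext c
      have := hc c.1 c.2
      have hc1 : (c : Ordinal.{0}) < ρ.ord := c.2
      simp only [G, hα, hβ, hc1, and_self, dif_pos] at this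
      exact Subtype.ext this
    exact congrArg Subtype.val (G0.injective this)
  let L : Ordinal.{0} → Ordinal.{0} → Prop := fun α β =>
    ∃ c < ρ.ord, (∀ c' < c, G α c' = G β c') ∧ G α c < G β c
  obtain ⟨A, hA, h | h⟩ := harrow (fun α β => if L α β then 0 else 1)
  · obtain ⟨⟨e, he, heA⟩, hcol⟩ := h
    have hmem : ∀ i < κ.ord, e i ∈ A := fun i hi => heA ▸ ⟨i, hi, rfl⟩
    refine no_lex hreg (hρ.trans hθκ) (· < ·) (fun x => lt_irrefl x) (fun i c => G (e i) c) ?_ ?_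
    · intro c hc δ hδ hm
      exact stab_inc hreg hτ (fun i => G (e i) c) (fun i hi => hG _ (hA (hmem i hi)) c hc) δ hδ hm
    · intro i j hij hj
      have := hcol _ (hmem i (hij.trans hj)) _ (hmem j hj) (he i (hij.trans hj) j hj hij)
      by_contra hL
      have hL' : ¬ L (e i) (e j) := hL
      simp [hL'] at this
  · obtain ⟨⟨e, he, heA⟩, hcol⟩ := h
    have hmem : ∀ i < θ.ord, e i ∈ A := fun i hi => heA ▸ ⟨i, hi, rfl⟩
    have hsl : (Order.succ ρ).ord ≤ θ.ord := ord_le_ord.2 (Order.succ_le_of_lt hρ)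
    refine no_lex (isRegular_succ hinf) (Order.lt_succ ρ) (· > ·) (fun x => lt_irrefl x)
      (fun i c => G (e i) c) ?_ ?_
    · intro c hc δ hδ hm
      exact stab_dec (fun i => G (e i) c) δ hδ hm
    · intro i j hij hj
      have hj' := hj.trans_le hsl
      have hi' := hij.trans hj'
      have hlt := he i hi' j hj' hij
      have := hcol _ (hmem i hi') _ (hmem j hj') hlt
      have hL : ¬ L (e i) (e j) := by
        intro hL
        simp [hL] at this
      have hne := hinj _ (hA (hmem i hi')) _ (hA (hmem j hj')) hlt.ne
      let T : Set Ordinal.{0} := {c | c < ρ.ord ∧ G (e i) c ≠ G (e j) c}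
      have hT : T.Nonempty := hne
      obtain ⟨h1, h2⟩ := csInf_mem hT
      have h3 : ∀ c' < sInf T, G (e i) c' = G (e j) c' := by
        intro c' hc'
        by_contra h4
        have h5 : c' ∈ T := ⟨hc'.trans h1, h4⟩
        have h6 : sInf T ≤ c' := csInf_le' h5
        exact absurd h6 hc'.not_ge
      refine ⟨sInf T, h1, h3, ?_⟩
      rcases lt_or_gt_of_ne h2 with h4 | h4
      · exact absurd ⟨sInf T, h1, h3, h4⟩ hL
      · exact h4

theorem leastCard_spec {X : Type 1} {P : Set X → Prop} (F : Set X) (hF : P F) (c : Cardinal.{0})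
    (hc : Cardinal.lift.{1} c = #F) : ∃ F : Set X, P F ∧ Cardinal.lift.{1} (leastCard P) = #F :=
  csInf_mem (s := {c : Cardinal.{0} | ∃ F : Set X, P F ∧ Cardinal.lift.{1} c = #F}) ⟨c, F, hF, hc⟩

theorem leastCard_le {X : Type 1} {P : Set X → Prop} (F : Set X) (hF : P F) (c : Cardinal.{0})
    (hc : #F ≤ Cardinal.lift.{1} c) : leastCard P ≤ c := by
  obtain ⟨d, hd⟩ := mem_range_lift_of_le hc
  have h1 : leastCard P ≤ d := csInf_le' ⟨F, hF, hd⟩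
  refine h1.trans ?_
  rw [← Cardinal.lift_le.{1}, hd]
  exact hc

section ideal
variable {κ lam : Cardinal.{0}}

theorem supK_lt (hreg : κ.IsRegular) {a : Set Ordinal.{0}} (ha : a ∈ smallSet κ lam) :
    supK κ a < κ.ord := by
  obtain ⟨γ, hγ, h⟩ := bnd_image hreg (a ∩ Iio κ.ord) (fun x => x)
    ((mk_le_mk_of_subset inter_subset_left).trans_lt ha.2) (fun t ht => ht.2)
  refine lt_of_le_of_lt ?_ hγ
  exact csSup_le' (fun t ht => (h t ht).le)

theorem le_supK {a : Set Ordinal.{0}} {γ : Ordinal.{0}} (hγ : γ < κ.ord) (h : γ ∈ a) :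
    γ ≤ supK κ a :=
  le_csSup ⟨κ.ord, fun _ hx => le_of_lt hx.2⟩ ⟨h, hγ⟩

theorem IdealP.empty_mem (hreg : κ.IsRegular) (H : IdealP κ lam) : ∅ ∈ H.mem := by
  have := H.sUnion_mem ∅ (empty_subset _) (by simpa using hreg.pos)
  simpa using this

theorem IdealP.biUnion_mem (H : IdealP κ lam) {X : Type 1} (T : Set X)
    (f : X → Set (Set Ordinal.{0})) (hT : #T < Cardinal.lift.{1} κ) (h : ∀ t ∈ T, f t ∈ H.mem) :
    (⋃ t ∈ T, f t) ∈ H.mem := by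
  rw [← sUnion_image]
  refine H.sUnion_mem _ ?_ (mk_image_le.trans_lt hT)
  rintro _ ⟨t, ht, rfl⟩
  exact h t ht

theorem IdealP.union_mem (hreg : κ.IsRegular) (H : IdealP κ lam) {A B : Set (Set Ordinal.{0})}
    (hA : A ∈ H.mem) (hB : B ∈ H.mem) : A ∪ B ∈ H.mem := by
  rw [← sUnion_pair]
  refine H.sUnion_mem _ ?_ ?_
  · rintro x (rfl | rfl)
    · exact hA
    · exact hB
  · refine lt_of_lt_of_le ?_ hreg.lift.aleph0_le
    exact lt_aleph0_iff_set_finite.2 (by simp)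

theorem IdealP.not_sup_mem (H : IdealP κ lam) {a : Set Ordinal.{0}}
    (ha : a ∈ smallSet κ lam) : {b ∈ smallSet κ lam | ¬ a ⊆ b} ∈ H.mem :=
  H.fine ⟨fun _ hb => hb.1, a, ha, fun _ hb => hb.2⟩

theorem singleton_small (hreg : κ.IsRegular) {γ : Ordinal.{0}} (hγ : γ < lam.ord) :
    ({γ} : Set Ordinal.{0}) ∈ smallSet κ lam := by
  refine ⟨by simpa using hγ, ?_⟩
  rw [mk_singleton]
  exact lt_of_lt_of_le one_lt_aleph0 hreg.lift.aleph0_le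

theorem IdealP.small_sup_mem (hreg : κ.IsRegular) (hlt : κ < lam) (H : IdealP κ lam)
    {γ : Ordinal.{0}} (hγ : γ < κ.ord) : {b ∈ smallSet κ lam | supK κ b < γ} ∈ H.mem := by
  refine H.subset_mem _ (H.not_sup_mem (singleton_small hreg (hγ.trans (ord_lt_ord.2 hlt)))) _ ?_
  rintro b ⟨hb, hb'⟩
  refine ⟨hb, fun h => ?_⟩
  exact absurd (le_supK hγ (h rfl)) hb'.not_ge

theorem IdealP.single_mem (hreg : κ.IsRegular) (hlt : κ < lam) (H : IdealP κ lam)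
    {a : Set Ordinal.{0}} (ha : a ∈ smallSet κ lam) : {a} ∈ H.mem := by
  have hne : ∃ ξ < lam.ord, ξ ∉ a := by
    by_contra hcon
    push Not at hcon
    have h1 : #(Iio lam.ord) ≤ #a := mk_le_mk_of_subset hcon
    rw [mk_Iio_ordinal, card_ord] at h1
    exact absurd (h1.trans_lt ha.2) (not_lt.2 (Cardinal.lift_le.2 hlt.le))
  obtain ⟨ξ, hξ, hξa⟩ := hne
  refine H.subset_mem _ (H.not_sup_mem (singleton_small hreg hξ)) _ ?_
  rintro b rfl
  exact ⟨ha, fun h => hξa (h rfl)⟩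

theorem IdealP.cof_spec (H : IdealP κ lam) : ∃ X : Set (Set (Set Ordinal.{0})),
    (X ⊆ H.mem ∧ ∀ A, A ∈ H.mem ↔ ∃ B ∈ X, A ⊆ B) ∧ Cardinal.lift.{1} H.cof = #X := by
  have h1 : #H.mem ≤ Cardinal.lift.{1} ((2 : Cardinal.{0}) ^ ((2 : Cardinal.{0}) ^ lam)) := by
    have h2 : #H.mem ≤ #(𝒫 (𝒫 (Iio lam.ord))) := by
      refine mk_le_mk_of_subset ?_
      intro A hA a ha
      exact (H.subset_pk A hA ha).1
    rw [mk_powerset, mk_powerset, mk_Iio_ordinal, card_ord] at h2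
    simpa using h2
  obtain ⟨d, hd⟩ := mem_range_lift_of_le h1
  exact leastCard_spec (P := fun X : Set (Set (Set Ordinal.{0})) =>
    X ⊆ H.mem ∧ ∀ A, A ∈ H.mem ↔ ∃ B ∈ X, A ⊆ B) H.mem
    ⟨subset_rfl, fun A => ⟨fun h => ⟨A, h, subset_rfl⟩,
      fun ⟨B, hB, hAB⟩ => H.subset_mem B hB A hAB⟩⟩ d hd

theorem IdealP.le_cof (hreg : κ.IsRegular) (hlt : κ < lam) (H : IdealP κ lam) : κ ≤ H.cof := by
  obtain ⟨X, ⟨hX, hX'⟩, hc⟩ := H.cof_spec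
  by_contra hcon
  rw [not_le, ← Cardinal.lift_lt.{0, 1}, hc] at hcon
  have h1 := H.sUnion_mem X hX hcon
  apply H.ne_top
  refine H.subset_mem _ h1 _ ?_
  intro a ha
  obtain ⟨B, hB, hB'⟩ := (hX' {a}).1 (H.single_mem hreg hlt ha)
  exact ⟨B, hB, hB' rfl⟩

/-- The ideal on `κ` generated by the projection of `H|C` and the sets `{β | h β < γ}`. -/
def pushIdeal (hreg : κ.IsRegular) (hlt : κ < lam) (H : IdealP κ lam) (C : Set (Set Ordinal.{0}))
    (hC : C ⊆ smallSet κ lam) (h : Ordinal.{0} → Ordinal.{0})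
    (hp : ∀ γ < κ.ord, {b ∈ C | γ ≤ h (supK κ b)} ∉ H.mem) : IdealK κ where
  mem := {X | X ⊆ Iio κ.ord ∧ ∃ γ < κ.ord, {b ∈ C | supK κ b ∈ X ∧ γ ≤ h (supK κ b)} ∈ H.mem}
  subset_iio := fun A hA => hA.1
  singleton_mem := by
    intro α hα
    refine ⟨by simpa using hα, 0, hreg.ord_pos, ?_⟩
    have hs : α + 1 < κ.ord := (isSuccLimit_ord hreg.aleph0_le).add_one_lt hα
    refine H.subset_mem _ (H.small_sup_mem hreg hlt hs) _ ?_
    rintro b ⟨hb, hb', _⟩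
    refine ⟨hC hb, ?_⟩
    rw [show supK κ b = α from hb']
    exact lt_add_one _
  subset_mem := by
    rintro A ⟨hA, γ, hγ, hA'⟩ B hB
    exact ⟨hB.trans hA, γ, hγ, H.subset_mem _ hA' _ (fun b hb => ⟨hb.1, hB hb.2.1, hb.2.2⟩)⟩
  sUnion_mem := by
    intro X hX hc
    have h1 : ∀ A, ∃ γ < κ.ord, A ∈ X → {b ∈ C | supK κ b ∈ A ∧ γ ≤ h (supK κ b)} ∈ H.mem := by
      intro A
      by_cases hA : A ∈ X
      · obtain ⟨_, γ, hγ, h2⟩ := hX hA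
        exact ⟨γ, hγ, fun _ => h2⟩
      · exact ⟨0, hreg.ord_pos, fun h' => absurd h' hA⟩
    choose D hD1 hD2 using h1
    obtain ⟨γ, hγ, hγ'⟩ := bnd_image hreg X D hc (fun A _ => hD1 A)
    refine ⟨sUnion_subset (fun A hA => (hX hA).1), γ, hγ, ?_⟩
    refine H.subset_mem _ (H.biUnion_mem X _ hc hD2) _ ?_
    rintro b ⟨hb, ⟨A, hA, hbA⟩, hb'⟩
    simp only [mem_iUnion]
    exact ⟨A, hA, hb, hbA, (hγ' A hA).le.trans hb'⟩
  ne_top := by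
    rintro ⟨_, γ, hγ, h1⟩
    refine hp γ hγ (H.subset_mem _ h1 _ ?_)
    rintro b ⟨hb, hb'⟩
    exact ⟨hb, supK_lt hreg (hC hb), hb'⟩

theorem pushIdeal_cof (hreg : κ.IsRegular) (hlt : κ < lam) (H : IdealP κ lam)
    (C : Set (Set Ordinal.{0}))
    (hC : C ⊆ smallSet κ lam) (h : Ordinal.{0} → Ordinal.{0})
    (hp : ∀ γ < κ.ord, {b ∈ C | γ ≤ h (supK κ b)} ∉ H.mem) :
    (pushIdeal hreg hlt H C hC h hp).cof ≤ H.cof := by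
  obtain ⟨X, ⟨hX, hX'⟩, hc⟩ := H.cof_spec
  let Y : Set (Set Ordinal.{0}) × Ordinal.{0} → Set Ordinal.{0} := fun p =>
    {β | β < κ.ord ∧ ∀ b ∈ C, supK κ b = β → p.2 ≤ h β → b ∈ p.1}
  refine leastCard_le (Y '' (X ×ˢ Iio κ.ord)) ?_ _ ?_
  · have h1 : Y '' (X ×ˢ Iio κ.ord) ⊆ (pushIdeal hreg hlt H C hC h hp).mem := by
      rintro _ ⟨⟨B, γ⟩, ⟨hB, hγ⟩, rfl⟩
      refine ⟨fun β hβ => hβ.1, γ, hγ, H.subset_mem _ (hX hB) _ ?_⟩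
      rintro b ⟨hb, hb1, hb2⟩
      exact hb1.2 b hb rfl hb2
    refine ⟨h1, fun A => ⟨?_, ?_⟩⟩
    · rintro ⟨hA, γ, hγ, hA'⟩
      obtain ⟨B, hB, hB'⟩ := (hX' _).1 hA'
      refine ⟨Y (B, γ), ⟨(B, γ), ⟨hB, hγ⟩, rfl⟩, fun β hβ => ⟨hA hβ, ?_⟩⟩
      rintro b hb rfl h2
      exact hB' ⟨hb, hβ, h2⟩
    · rintro ⟨B, hB, hAB⟩
      exact (pushIdeal hreg hlt H C hC h hp).subset_mem _ (h1 hB) _ hAB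
  · refine mk_image_le.trans ?_
    rw [mk_setProd, ← hc, mk_Iio_ordinal, card_ord, ← lift_mul, Cardinal.lift_le]
    have hk := H.le_cof hreg hlt
    exact (mul_le_mul_right hk _).trans (mul_eq_self (hreg.aleph0_le.trans hk)).le

theorem node_lemma (hreg : κ.IsRegular) (hlt : κ < lam) (H : IdealP κ lam)
    (hcof : H.cof < nonK κ (fun J => WeaklySelective J))
    (F : Ordinal.{0} → Ordinal.{0} → Fin 2) (C : Set (Set Ordinal.{0})) (hC : C ⊆ smallSet κ lam)
    (hno : ∀ B ⊆ C, B ∉ H.mem → ¬ ∀ p ∈ pairsKK κ B, F p.1 p.2 = 0) :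
    ∃ x ⊆ C, #x < Cardinal.lift.{1} κ ∧
      {b ∈ C | ∀ a ∈ x, ¬ (prec κ a b ∧ F (supK κ a) (supK κ b) = 1)} ∈ H.mem := by
  let W : Ordinal.{0} → Set Ordinal.{0} := fun β =>
    {α | (∃ a ∈ C, supK κ a = α) ∧ α < β ∧ F α β = 1} ∪ {β}
  let h : Ordinal.{0} → Ordinal.{0} := fun β => sInf (W β)
  have hle : ∀ β, h β ≤ β := fun β => csInf_le' (s := W β) (Or.inr rfl)
  have hW : ∀ β, h β ∈ W β := fun β => csInf_mem (s := W β) ⟨β, Or.inr rfl⟩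
  by_cases hp : ∀ γ < κ.ord, {b ∈ C | γ ≤ h (supK κ b)} ∉ H.mem
  · exfalso
    let J := pushIdeal hreg hlt H C hC h hp
    have hws : WeaklySelective J := by
      by_contra hn
      have h1 : nonK κ (fun J => WeaklySelective J) ≤ J.cof := csInf_le' ⟨J, rfl, hn⟩
      exact absurd (h1.trans (pushIdeal_cof hreg hlt H C hC h hp)) hcof.not_ge
    obtain ⟨hP, hQ⟩ := hws
    obtain ⟨D, hD, -, hD'⟩ := hP (Iio κ.ord) ⟨subset_rfl, J.ne_top⟩ h
      (fun α hα => (hle α).trans_lt hα) (by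
        intro β
        rcases lt_or_ge β κ.ord with hβ | hβ
        · refine ⟨fun α hα => hα.1, β + 1, (isSuccLimit_ord hreg.aleph0_le).add_one_lt hβ, ?_⟩
          refine H.subset_mem _ (H.empty_mem hreg) _ ?_
          rintro b ⟨_, ⟨_, hb⟩, hb'⟩
          rw [hb] at hb'
          exact absurd (lt_add_one β) hb'.not_gt
        · have : {α ∈ Iio κ.ord | h α = β} = ∅ := by
            ext α
            simp only [mem_ofPred_eq, mem_empty_iff_false, iff_false, not_and]
            intro hα hh
            exact absurd ((hle α).trans_lt hα) (by rw [hh]; exact hβ.not_gt)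
          rw [this]
          exact J.subset_mem _ (J.singleton_mem 0 hreg.ord_pos) _ (empty_subset _))
    have hg : ∀ α, ∃ γ < κ.ord, α < κ.ord → ∀ β ∈ D, h β ≤ α → β < γ := by
      intro α
      by_cases hα : α < κ.ord
      · have hcard : #(⋃ v ∈ Iio (α + 1), {β ∈ D | h β = v}) < Cardinal.lift.{1} κ := by
          refine (card_biUnion_lt_iff_forall_of_isRegular hreg.lift ?_).2 (fun v _ => hD' v)
          exact mk_Iio_lt ((isSuccLimit_ord hreg.aleph0_le).add_one_lt hα)
        obtain ⟨γ, hγ, hγ'⟩ := bnd_image hreg _ (fun x => x) hcard (by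
          intro t ht
          simp only [mem_iUnion] at ht
          obtain ⟨_, _, ht, _⟩ := ht
          exact hD.1 ht)
        refine ⟨γ, hγ, fun _ β hβ hβ' => hγ' β ?_⟩
        simp only [mem_iUnion]
        exact ⟨h β, Order.lt_add_one_iff.2 hβ', hβ, rfl⟩
      · exact ⟨0, hreg.ord_pos, fun h' => absurd h' hα⟩
    choose g hg1 hg2 using hg
    obtain ⟨E, hE, hED, hE'⟩ := hQ D hD g (fun α _ => hg1 α)
    refine hno {b ∈ C | supK κ b ∈ E} (fun b hb => hb.1) ?_ ?_
    · intro hmem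
      refine hE.2 ⟨hE.1, 0, hreg.ord_pos, H.subset_mem _ hmem _ ?_⟩
      rintro b ⟨hb, hb', _⟩
      exact ⟨hb, hb'⟩
    · rintro p ⟨a, ⟨ha, haE⟩, b, ⟨hb, hbE⟩, hab, rfl⟩
      by_contra hF
      have hF1 : F (supK κ a) (supK κ b) = 1 := by
        simp only at hF
        omega
      have h1 : h (supK κ b) ≤ supK κ a :=
        csInf_le' (s := W (supK κ b)) (Or.inl ⟨⟨a, ha, rfl⟩, hab, hF1⟩)
      have h2 := hg2 _ (hE.1 haE) _ (hED hbE) h1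
      exact lt_asymm h2 (hE' _ haE _ hbE hab)
  · push Not at hp
    obtain ⟨γ, hγ, hmem⟩ := hp
    classical
    have hr : ∀ α : Ordinal.{0}, ∃ a : Set Ordinal.{0},
        (∃ a ∈ C, supK κ a = α) → a ∈ C ∧ supK κ a = α := by
      intro α
      by_cases hα : ∃ a ∈ C, supK κ a = α
      · obtain ⟨a, ha⟩ := hα
        exact ⟨a, fun _ => ha⟩
      · exact ⟨∅, fun h' => absurd h' hα⟩
    choose rep hrep using hr
    let T : Set Ordinal.{0} := {α | α < γ ∧ ∃ a ∈ C, supK κ a = α}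
    have hT : #T < Cardinal.lift.{1} κ :=
      (mk_le_mk_of_subset (fun α hα => hα.1 : T ⊆ Iio γ)).trans_lt (mk_Iio_lt hγ)
    refine ⟨rep '' T, ?_, mk_image_le.trans_lt hT, ?_⟩
    · rintro _ ⟨α, hα, rfl⟩
      exact (hrep α hα.2).1
    · have hU := H.biUnion_mem T (fun α => {b ∈ smallSet κ lam | ¬ rep α ⊆ b}) hT
        (fun α hα => H.not_sup_mem (hC (hrep α hα.2).1))
      refine H.subset_mem _ (H.union_mem hreg hmem
        (H.union_mem hreg (H.small_sup_mem hreg hlt hγ) hU)) _ ?_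
      rintro b ⟨hb, hb'⟩
      rcases le_or_gt γ (h (supK κ b)) with h1 | h1
      · exact Or.inl ⟨hb, h1⟩
      right
      rcases hW (supK κ b) with ⟨h2, h3, h4⟩ | h2
      · right
        simp only [mem_iUnion]
        refine ⟨h (supK κ b), ⟨h1, h2⟩, hC hb, fun hsub => ?_⟩
        have h5 := (hrep _ h2).2
        refine hb' _ ⟨_, ⟨h1, h2⟩, rfl⟩ ⟨⟨hsub, ?_⟩, ?_⟩
        · rw [h5]; exact h3
        · rw [h5]; exact h4
      · left
        rw [show h (supK κ b) = supK κ b from h2] at h1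
        exact ⟨hC hb, h1⟩

end ideal

/-- Suppose `θ` is an infinite cardinal `< κ` with `κ → (κ, θ)²` and `H` is an
ideal on `P_κ(λ)` with `cof(H) < non_κ(weakly selective)`. Then `H⁺ →_{κ,κ} (H⁺, θ+1)²`. -/
theorem arrowPKK_of_cof_lt_non (κ lam θ : Cardinal.{0}) (hreg : κ.IsRegular) (huc : ℵ₀ < κ)
    (hlt : κ < lam) (hθ : ℵ₀ ≤ θ) (hθκ : θ < κ) (harrow : ArrowKTheta κ θ.ord)
    (H : IdealP κ lam) (hcof : H.cof < nonK κ (fun J => WeaklySelective J)) :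
    ArrowPKK κ lam H.mem (θ.ord + 1) := by
  intro F A hA
  by_contra hcon
  push Not at hcon
  classical
  let R : Set Ordinal.{0} → Set Ordinal.{0} → Prop := fun a b =>
    prec κ a b ∧ F (supK κ a) (supK κ b) = 1
  have hx : ∀ C : Set (Set Ordinal.{0}), ∃ x : Set (Set Ordinal.{0}), C ⊆ A → x ⊆ C ∧
      #x < Cardinal.lift.{1} κ ∧ {b ∈ C | ∀ a ∈ x, ¬ R a b} ∈ H.mem := by
    intro C
    by_cases hC : C ⊆ A
    · obtain ⟨x, h⟩ := node_lemma hreg hlt H hcof F C (hC.trans hA.1) (by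
        intro B hB hBm hB0
        obtain ⟨p, hp, hp'⟩ := (hcon B (hB.trans hC)).1 ⟨(hB.trans hC).trans hA.1, hBm⟩
        exact hp' (hB0 p hp))
      exact ⟨x, fun _ => h⟩
    · exact ⟨∅, fun h => absurd h hC⟩
  choose xs hxs using hx
  let CK : Set (Set Ordinal.{0}) → Set (Set Ordinal.{0}) := fun K => {b ∈ A | ∀ a ∈ K, R a b}
  have hCK : ∀ K, CK K ⊆ A := fun K b hb => hb.1
  have hpick : ∀ (K : Set (Set Ordinal.{0})) (b : Set Ordinal.{0}), ∃ s : Set Ordinal.{0},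
      (∃ a ∈ xs (CK K), R a b) → s ∈ xs (CK K) ∧ R s b := by
    intro K b
    by_cases h : ∃ a ∈ xs (CK K), R a b
    · obtain ⟨a, ha⟩ := h
      exact ⟨a, fun _ => ha⟩
    · exact ⟨∅, fun h' => absurd h' h⟩
  choose pick hpick using hpick
  have hpath : ∀ b : Set Ordinal.{0}, ∃ P : Ordinal.{0} → Set Ordinal.{0},
      ∀ j, P j = pick (P '' Iio j) b := by
    intro b
    let P : Ordinal.{0} → Set Ordinal.{0} := WellFoundedLT.fix
      (motive := fun _ : Ordinal.{0} => Set Ordinal.{0})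
      (fun j ih => pick {s | ∃ i, ∃ hi : i < j, ih i hi = s} b)
    refine ⟨P, fun j => ?_⟩
    have h1 : P j = pick {s | ∃ i, ∃ _ : i < j, P i = s} b := WellFoundedLT.fix_eq _ j
    rw [h1]
    congr 1
    ext s
    constructor
    · rintro ⟨i, hi, h⟩
      exact ⟨i, hi, h⟩
    · rintro ⟨i, hi, h⟩
      exact ⟨i, hi, h⟩
  choose path hpath using hpath
  let N : Set Ordinal.{0} → Ordinal.{0} → Set (Set Ordinal.{0}) := fun b j => path b '' Iio j
  let good : Set Ordinal.{0} → Ordinal.{0} → Prop := fun b j => ∃ a ∈ xs (CK (N b j)), R a b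
  have hgood : ∀ b j, good b j → path b j ∈ xs (CK (N b j)) ∧ R (path b j) b := by
    intro b j hg
    rw [hpath b j]
    exact hpick (N b j) b hg
  have hbCK : ∀ b ∈ A, ∀ j, (∀ i < j, good b i) → b ∈ CK (N b j) := by
    intro b hb j hj
    refine ⟨hb, ?_⟩
    rintro _ ⟨i, hi, rfl⟩
    exact (hgood b i (hj i hi)).2
  let Nodes : Ordinal.{0} → Set (Set (Set Ordinal.{0})) := fun j =>
    (fun b => N b j) '' {b ∈ A | ∀ i < j, good b i}
  have hNodes : ∀ j, j < θ.ord → #(Nodes j) < Cardinal.lift.{1} κ := by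
    intro j
    induction j using WellFoundedLT.induction with
    | ind j ih =>
      intro hj
      let U : Set (Set Ordinal.{0}) := ⋃ i ∈ Iio j, ⋃ K ∈ Nodes i, xs (CK K)
      have hU : #U < Cardinal.lift.{1} κ := by
        refine (card_biUnion_lt_iff_forall_of_isRegular hreg.lift
          (mk_Iio_lt (hj.trans (ord_lt_ord.2 hθκ)))).2 (fun i hi => ?_)
        refine (card_biUnion_lt_iff_forall_of_isRegular hreg.lift
          (ih i hi (lt_trans hi hj))).2 (fun K hK => ?_)
        exact (hxs (CK K) (hCK K)).2.1
      have hsub : Nodes j ⊆ range (fun f : Iio j → U => range (fun i => (f i : Set Ordinal.{0}))) := by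
        rintro _ ⟨b, ⟨hb, hbj⟩, rfl⟩
        have hin : ∀ i : Iio j, path b i ∈ U := by
          rintro ⟨i, hi⟩
          simp only [U, mem_iUnion]
          refine ⟨i, hi, N b i, ⟨b, ⟨hb, fun k hk => hbj k (lt_trans hk hi)⟩, rfl⟩, ?_⟩
          exact (hgood b i (hbj i hi)).1
        refine ⟨fun i => ⟨path b i, hin i⟩, ?_⟩
        simp only [N]
        rw [image_eq_range]
      refine ((mk_le_mk_of_subset hsub).trans mk_range_le).trans_lt ?_
      obtain ⟨τ, hτ, hτ'⟩ := lt_lift_iff.1 hU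
      rw [← power_def, ← hτ', mk_Iio_ordinal, ← lift_power, Cardinal.lift_lt]
      exact power_lt_of_arrow hreg huc hθκ harrow hτ (lt_ord.1 hj)
  have hLost : (⋃ j ∈ Iio θ.ord, ⋃ K ∈ Nodes j,
      {b ∈ CK K | ∀ a ∈ xs (CK K), ¬ R a b}) ∈ H.mem := by
    refine H.biUnion_mem _ _ (mk_Iio_lt (ord_lt_ord.2 hθκ)) (fun j hj => ?_)
    refine H.biUnion_mem _ _ (hNodes j hj) (fun K _ => ?_)
    exact (hxs (CK K) (hCK K)).2.2
  have hb : ∃ b ∈ A, b ∉ (⋃ j ∈ Iio θ.ord, ⋃ K ∈ Nodes j,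
      {b ∈ CK K | ∀ a ∈ xs (CK K), ¬ R a b}) := by
    by_contra hall
    push Not at hall
    exact hA.2 (H.subset_mem _ hLost _ hall)
  obtain ⟨b, hbA, hbL⟩ := hb
  have hall : ∀ j, j < θ.ord → good b j := by
    intro j
    induction j using WellFoundedLT.induction with
    | ind j ih =>
      intro hj
      by_contra hng
      have hPg : ∀ i < j, good b i := fun i hi => ih i hi (hi.trans hj)
      apply hbL
      simp only [mem_iUnion]
      exact ⟨j, hj, N b j, ⟨b, ⟨hbA, hPg⟩, rfl⟩, hbCK b hbA j hPg,
        fun a ha hR => hng ⟨a, ha, hR⟩⟩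
  have hmemCK : ∀ j < θ.ord, path b j ∈ CK (N b j) := fun j hj =>
    (hxs _ (hCK _)).1 (hgood b j (hall j hj)).1
  let e : Ordinal.{0} → Set Ordinal.{0} := fun i => if i < θ.ord then path b i else b
  have he : ∀ i < θ.ord + 1, ∀ j < θ.ord + 1, i < j → R (e i) (e j) := by
    intro i _ j hj hij
    have hi : i < θ.ord := hij.trans_le (Order.lt_add_one_iff.1 hj)
    by_cases hjt : j < θ.ord
    · simp only [e, hi, hjt, if_true]
      exact (hmemCK j hjt).2 _ ⟨i, hij, rfl⟩
    · simp only [e, hi, hjt, if_true, if_false]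
      exact (hgood b i (hall i hi)).2
  have heA : e '' Iio (θ.ord + 1) ⊆ A := by
    rintro _ ⟨i, _, rfl⟩
    by_cases hi : i < θ.ord
    · simp only [e, hi, if_true]
      exact (hmemCK i hi).1
    · simp only [e, hi, if_false]
      exact hbA
  obtain ⟨p, hp, hp'⟩ := (hcon _ heA).2 ⟨e, fun i hi j hj hij => (he i hi j hj hij).1, rfl⟩
  apply hp'
  obtain ⟨_, ⟨i, hi, rfl⟩, _, ⟨j, hj, rfl⟩, hlt', rfl⟩ := hp
  rcases lt_trichotomy i j with h | h | h
  · exact (he i hi j hj h).2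
  · subst h
    exact absurd hlt' (lt_irrefl _)
  · exact absurd hlt' (lt_asymm (he j hj i hi h).1.2)

end PaperFormal
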